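/- arXiv:0901.1853 — 2 statements merged into one kernel-verified Lean document; each statement's English description precedes it below -/
import Mathlib

section
/- For every crossover fraction p ∈ (0, 1/2), every rate R ≥ 0 that is weakly achievable by deterministic codes against causal adversaries with power p satisfies R ≤ min{1 − H(p), max(1 − 4p, 0)}. (Theorem 1: the weak capacity of the binary causal-adversary channel with deterministic encoders is at most min{1 − H(p), (1 − 4p)^+}.) -/
open Finset

/-- The prefix `(x_1, …, x_{i+1})` (0-indexed: `x_0, …, x_i`) of a word `x : Fin n → Bool`. -/
def wordPrefix {n : ℕ} (x : Fin n → Bool) (i : Fin n) : Fin (i.1 + 1) → Bool :=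
  fun k => x ⟨k.1, lt_of_le_of_lt (Nat.lt_succ_iff.mp k.isLt) i.isLt⟩

/-- A causal adversary with power `p` on block length `n`: a (finite) jamming random
variable `J` with distribution `μ`, and for each position `i` a jamming function `g i`
depending only on the prefix `(x_1, …, x_i)` of the transmitted word and on `J`, flipping
at most `p * n` bits in total. -/
structure CausalAdversary (n : ℕ) (p : ℝ) where
  J : Type
  [instJ : Fintype J]
  μ : J → ℝ
  μ_nonneg : ∀ j, 0 ≤ μ j
  μ_sum : ∑ j, μ j = 1
  g : (i : Fin n) → (Fin (i.1 + 1) → Bool) → J → Bool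
  power : ∀ (x : Fin n → Bool) (j : J),
    (((univ : Finset (Fin n)).filter (fun i => g i (wordPrefix x i) j = true)).card : ℝ) ≤ p * n

attribute [instance] CausalAdversary.instJ

/-- The word received by Bob when Alice transmits `x` and the adversary's randomness is `j`:
`y_i = x_i XOR g_i((x_1,…,x_i), j)`. -/
def CausalAdversary.received {n : ℕ} {p : ℝ} (A : CausalAdversary n p)
    (x : Fin n → Bool) (j : A.J) : Fin n → Bool :=
  fun i => xor (x i) (A.g i (wordPrefix x i) j)

/-- The number of messages of a deterministic `(n, R n)`-code: `⌈2^{R n}⌉`. -/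
noncomputable def numMessages (n : ℕ) (R : ℝ) : ℕ := ⌈(2 : ℝ) ^ (R * n)⌉₊

/-- A deterministic `(n, R n)`-code: an injective encoder on the message set
`{1, …, ⌈2^{Rn}⌉}` together with a possibly randomized decoder (given by, for each received
word `y`, a probability distribution `dec y` on the messages). -/
structure DetCode (n : ℕ) (R : ℝ) where
  enc : Fin (numMessages n R) → (Fin n → Bool)
  enc_inj : Function.Injective enc
  dec : (Fin n → Bool) → Fin (numMessages n R) → ℝ
  dec_nonneg : ∀ y u, 0 ≤ dec y u
  dec_sum : ∀ y, ∑ u, dec y u = 1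

/-- The probability of error of a deterministic code against a causal adversary: the
probability, over a uniformly random message `u`, the adversary's randomness, and the
decoder's randomness, that the decoded message differs from `u`. -/
noncomputable def DetCode.errProb {n : ℕ} {R p : ℝ} (C : DetCode n R)
    (A : CausalAdversary n p) : ℝ :=
  (1 / (numMessages n R : ℝ)) *
    ∑ u, ∑ j, A.μ j * (1 - C.dec (A.received (C.enc u) j) u)

/-- A rate `R` is weakly achievable by deterministic codes against causal adversaries with
power `p` if for all `ε > 0`, `δ > 0`, and sufficiently large `n`, some deterministic
`(n, (R-δ)n)`-code has probability of error at most `ε` against every causal adversary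
with power `p`. -/
def weaklyAchievableDet (p R : ℝ) : Prop :=
  ∀ ε > (0 : ℝ), ∀ δ > (0 : ℝ), ∃ N : ℕ, ∀ n ≥ N, ∃ C : DetCode n (R - δ),
    ∀ A : CausalAdversary n p, C.errProb A ≤ ε

/-- The binary entropy function. -/
noncomputable def binaryEntropy (p : ℝ) : ℝ :=
  -p * Real.logb 2 p - (1 - p) * Real.logb 2 (1 - p)

/-- A code with error at most `ε` against every causal adversary has total error at most `ε M`
under every deterministic causal jamming rule `G` obeying the power constraint. -/
lemma DetCode.sum_err_le_of_causal {n : ℕ} {R p ε : ℝ} (C : DetCode n R)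
    (hC : ∀ A : CausalAdversary n p, C.errProb A ≤ ε)
    (G : (Fin n → Bool) → Fin n → Bool)
    (hcausal : ∀ x x' i, (∀ j ≤ i, x j = x' j) → G x i = G x' i)
    (hpow : ∀ x, ((univ.filter fun i => G x i = true).card : ℝ) ≤ p * n) :
    ∑ u, (1 - C.dec (fun i => xor (C.enc u i) (G (C.enc u) i)) u) ≤ ε * numMessages n R := by
  have hM : (0 : ℝ) < numMessages n R := by
    unfold numMessages
    exact_mod_cast Nat.ceil_pos.mpr (by positivity)
  have hG : ∀ (x : Fin n → Bool) (i : Fin n),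
      G (fun k => if h : k.1 < i.1 + 1 then wordPrefix x i ⟨k.1, h⟩ else false) i = G x i := by
    intro x i
    apply hcausal
    intro j hj
    have : j.1 < i.1 + 1 := Nat.lt_succ_of_le hj
    simp [this, wordPrefix]
  let A : CausalAdversary n p :=
    { J := Unit
      μ := fun _ => 1
      μ_nonneg := fun _ => zero_le_one
      μ_sum := by simp
      g := fun i w _ => G (fun k => if h : k.1 < i.1 + 1 then w ⟨k.1, h⟩ else false) i
      power := by
        intro x _
        simp only [hG]
        exact hpow x }
  have hrec : ∀ x j, A.received x j = fun i => xor (x i) (G x i) := by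
    intro x j
    funext i
    exact congrArg (xor (x i)) (hG x i)
  have h := hC A
  unfold DetCode.errProb at h
  rw [one_div, inv_mul_le_iff₀ hM] at h
  have hs : ∀ u, ∑ j, A.μ j * (1 - C.dec (A.received (C.enc u) j) u)
      = 1 - C.dec (fun i => xor (C.enc u i) (G (C.enc u) i)) u := by
    intro u
    simp only [hrec]
    rw [← Finset.sum_mul, A.μ_sum, one_mul]
  simp only [hs] at h
  linarith

lemma DetCode.dec_le_one {n : ℕ} {R : ℝ} (C : DetCode n R) (y : Fin n → Bool)
    (u : Fin (numMessages n R)) : C.dec y u ≤ 1 := by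
  rw [← C.dec_sum y]
  exact Finset.single_le_sum (fun v _ => C.dec_nonneg y v) (Finset.mem_univ u)

/-- Sphere-packing bound: averaging over all error patterns of weight `k`. -/
lemma DetCode.choose_mul_le {n : ℕ} {R p ε : ℝ} (C : DetCode n R)
    (hC : ∀ A : CausalAdversary n p, C.errProb A ≤ ε) (k : ℕ) (hk : (k : ℝ) ≤ p * n) :
    (n.choose k : ℝ) * ((1 - ε) * numMessages n R) ≤ 2 ^ n := by
  classical
  have hsum : ∀ S ∈ powersetCard k (univ : Finset (Fin n)),
      (1 - ε) * numMessages n R ≤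
        ∑ u, C.dec (fun i => xor (C.enc u i) (decide (i ∈ S))) u := by
    intro S hS
    have h := C.sum_err_le_of_causal hC (fun _ i => decide (i ∈ S)) (fun _ _ _ _ => rfl)
      (by
        intro x
        have hcard : S.card = k := (mem_powersetCard.mp hS).2
        simpa [hcard] using hk)
    rw [Finset.sum_sub_distrib] at h
    simp only [sum_const, card_univ, Fintype.card_fin, nsmul_eq_mul, mul_one] at h
    linarith
  calc (n.choose k : ℝ) * ((1 - ε) * numMessages n R)
      = ∑ S ∈ powersetCard k (univ : Finset (Fin n)), (1 - ε) * numMessages n R := by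
        simp [card_powersetCard]
    _ ≤ ∑ S ∈ powersetCard k (univ : Finset (Fin n)),
          ∑ u, C.dec (fun i => xor (C.enc u i) (decide (i ∈ S))) u := sum_le_sum hsum
    _ = ∑ u, ∑ S ∈ powersetCard k (univ : Finset (Fin n)),
          C.dec (fun i => xor (C.enc u i) (decide (i ∈ S))) u := sum_comm
    _ ≤ ∑ u, ∑ y, C.dec y u := by
        apply sum_le_sum
        intro u _
        have hinj : Set.InjOn (fun (S : Finset (Fin n)) (i : Fin n) =>
            xor (C.enc u i) (decide (i ∈ S))) (powersetCard k (univ : Finset (Fin n))) := by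
          intro S _ T _ hST
          ext i
          have := congrFun hST i
          simpa using this
        rw [← sum_image (f := fun y => C.dec y u) hinj]
        exact sum_le_sum_of_subset_of_nonneg (subset_univ _) (fun y _ _ => C.dec_nonneg y u)
    _ = ∑ y, ∑ u, C.dec y u := sum_comm
    _ = 2 ^ n := by simp [C.dec_sum]

/-- The binomial probability at `⌊p n⌋` is, up to a factor two, the largest one. -/
lemma binomial_term_le {p : ℝ} (hp0 : 0 < p) (hp1 : p < 1 / 2) (n : ℕ) (j : ℕ) (hj : j ≤ n) :
    (n.choose j : ℝ) * p ^ j * (1 - p) ^ (n - j) ≤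
      2 * ((n.choose ⌊p * n⌋₊ : ℝ) * p ^ ⌊p * n⌋₊ * (1 - p) ^ (n - ⌊p * n⌋₊)) := by
  set k := ⌊p * n⌋₊ with hk
  have hpn : 0 ≤ p * n := by positivity
  have hk1 : (k : ℝ) ≤ p * n := Nat.floor_le hpn
  have hk2 : p * n < k + 1 := Nat.lt_floor_add_one _
  have hq : 0 < 1 - p := by linarith
  set t : ℕ → ℝ := fun j => (n.choose j : ℝ) * p ^ j * (1 - p) ^ (n - j) with ht
  have htn : ∀ j, 0 ≤ t j := fun j => by simp only [ht]; positivity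
  -- consecutive terms
  have hstep : ∀ j, j < n → t (j + 1) * ((j + 1) * (1 - p)) = t j * ((n - j) * p) := by
    intro j hj
    have h1 : ((n.choose (j + 1) : ℕ) : ℝ) * (j + 1) = n.choose j * (n - j) := by
      have := Nat.choose_succ_right_eq n j
      rw [← Nat.cast_sub hj.le]
      exact_mod_cast this
    have h2 : n - j = (n - (j + 1)) + 1 := by omega
    simp only [ht]
    rw [h2, pow_succ, pow_succ]
    linear_combination p ^ j * p * (1 - p) ^ (n - (j + 1)) * (1 - p) * h1
  change t j ≤ 2 * t k
  have hkn : k ≤ n := by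
    have : (k : ℝ) ≤ n := by nlinarith [(Nat.cast_nonneg n : (0 : ℝ) ≤ n)]
    exact_mod_cast this
  have hlow : ∀ d, d ≤ k → t (k - d) ≤ t k := by
    intro d
    induction d with
    | zero => simp
    | succ d ih =>
      intro hd
      refine le_trans ?_ (ih (by omega))
      set i := k - (d + 1) with hi
      have hi' : k - d = i + 1 := by omega
      rw [hi']
      have hik : (i : ℝ) + 1 ≤ k := by exact_mod_cast (by omega : i + 1 ≤ k)
      have h := hstep i (by omega)
      have hpos : 0 < ((i : ℝ) + 1) * (1 - p) := by positivity
      refine le_of_mul_le_mul_right ?_ hpos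
      rw [h]
      apply mul_le_mul_of_nonneg_left _ (htn i)
      nlinarith
  have hhigh : ∀ d, k + 1 + d ≤ n → t (k + 1 + d) ≤ 2 * t k := by
    intro d
    induction d with
    | zero =>
      intro hd
      have h := hstep k (by omega)
      have hpos : 0 < ((k : ℝ) + 1) * (1 - p) := by positivity
      refine le_of_mul_le_mul_right ?_ hpos
      rw [add_zero, h, mul_comm (2 : ℝ), mul_assoc (t k)]
      apply mul_le_mul_of_nonneg_left _ (htn k)
      nlinarith [(Nat.cast_nonneg k : (0 : ℝ) ≤ k)]
    | succ d ih =>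
      intro hd
      refine le_trans ?_ (ih (by omega))
      have h := hstep (k + 1 + d) (by omega)
      have hpos : 0 < (((k + 1 + d : ℕ) : ℝ) + 1) * (1 - p) := by positivity
      refine le_of_mul_le_mul_right ?_ hpos
      rw [← add_assoc, h]
      apply mul_le_mul_of_nonneg_left _ (htn _)
      push_cast
      nlinarith [(Nat.cast_nonneg d : (0 : ℝ) ≤ d)]
  rcases le_or_gt j k with h | h
  · have := hlow (k - j) (by omega)
    rw [show k - (k - j) = j by omega] at this
    linarith [htn k]
  · have := hhigh (j - (k + 1)) (by omega)
    rwa [show k + 1 + (j - (k + 1)) = j by omega] at this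

lemma two_rpow_entropy_le_choose {p : ℝ} (hp0 : 0 < p) (hp1 : p < 1 / 2) (n : ℕ) :
    p * (2 : ℝ) ^ (binaryEntropy p * n) ≤ 2 * (n + 1) * n.choose ⌊p * n⌋₊ := by
  set k := ⌊p * n⌋₊ with hk
  have hpn : 0 ≤ p * n := by positivity
  have hk1 : (k : ℝ) ≤ p * n := Nat.floor_le hpn
  have hk2 : p * n < k + 1 := Nat.lt_floor_add_one _
  have hq : 0 < 1 - p := by linarith
  have hkn : k ≤ n := by
    have : (k : ℝ) ≤ n := by nlinarith [(Nat.cast_nonneg n : (0 : ℝ) ≤ n)]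
    exact_mod_cast this
  have hone : (1 : ℝ) ≤ (n + 1) * (2 * ((n.choose k : ℝ) * p ^ k * (1 - p) ^ (n - k))) := by
    have h := add_pow p (1 - p) n
    rw [add_sub_cancel, one_pow] at h
    calc (1 : ℝ) = _ := h
      _ ≤ ∑ j ∈ range (n + 1), 2 * ((n.choose k : ℝ) * p ^ k * (1 - p) ^ (n - k)) := by
          apply sum_le_sum
          intro j hj
          have := binomial_term_le hp0 hp1 n j (by simpa [Nat.lt_succ_iff] using hj)
          calc _ = (n.choose j : ℝ) * p ^ j * (1 - p) ^ (n - j) := by ring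
            _ ≤ _ := this
      _ = _ := by simp
  have hent : (2 : ℝ) ^ (binaryEntropy p * n) * (p ^ (p * n) * (1 - p) ^ ((1 - p) * n)) = 1 := by
    have e1 : p ^ (p * n) = (2 : ℝ) ^ (Real.logb 2 p * (p * n)) := by
      rw [Real.rpow_mul (x := 2) (by norm_num), Real.rpow_logb (by norm_num) (by norm_num) hp0]
    have e2 : (1 - p) ^ ((1 - p) * n) = (2 : ℝ) ^ (Real.logb 2 (1 - p) * ((1 - p) * n)) := by
      rw [Real.rpow_mul (x := 2) (by norm_num), Real.rpow_logb (by norm_num) (by norm_num) hq]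
    rw [e1, e2, ← Real.rpow_add (by norm_num), ← Real.rpow_add (by norm_num)]
    unfold binaryEntropy
    rw [← Real.rpow_zero 2]
    congr 1
    ring
  have hcmp : p * (p ^ k * (1 - p) ^ (n - k)) ≤ p ^ (p * n) * (1 - p) ^ ((1 - p) * n) := by
    have e1 : p * p ^ k ≤ p ^ (p * n) := by
      rw [mul_comm, ← pow_succ, ← Real.rpow_natCast]
      apply Real.rpow_le_rpow_of_exponent_ge hp0 (by linarith)
      push_cast
      exact hk2.le
    have e2 : (1 - p) ^ (n - k) ≤ (1 - p) ^ ((1 - p) * n) := by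
      rw [← Real.rpow_natCast]
      apply Real.rpow_le_rpow_of_exponent_ge hq (by linarith)
      rw [Nat.cast_sub hkn]
      linarith
    rw [← mul_assoc]
    exact mul_le_mul e1 e2 (by positivity) (by positivity)
  set E := (2 : ℝ) ^ (binaryEntropy p * n)
  set Q := p ^ k * (1 - p) ^ (n - k)
  set P := p ^ (p * n) * (1 - p) ^ ((1 - p) * n)
  have hE : 0 < E := by positivity
  have hQ : 0 < Q := by positivity
  have hc : (0 : ℝ) ≤ 2 * (n + 1) * n.choose k := by positivity
  have hone' : 1 ≤ (2 * (n + 1) * n.choose k) * Q := by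
    calc (1 : ℝ) ≤ _ := hone
      _ = _ := by ring
  refine le_of_mul_le_mul_right ?_ hQ
  nlinarith

lemma rate_le_one_sub_entropy {p R : ℝ} (hp0 : 0 < p) (hp1 : p < 1 / 2)
    (hach : weaklyAchievableDet p R) : R ≤ 1 - binaryEntropy p := by
  by_contra! hlt
  set δ := (R - (1 - binaryEntropy p)) / 2 with hδ
  have hδ0 : 0 < δ := by linarith
  obtain ⟨N, hN⟩ := hach (1 / 2) (by norm_num) δ hδ0
  have key : ∀ n ≥ N, p * (2 : ℝ) ^ (δ * n) ≤ 4 * (n + 1) := by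
    intro n hn
    obtain ⟨C, hC⟩ := hN n hn
    have h1 := C.choose_mul_le hC ⌊p * n⌋₊ (Nat.floor_le (by positivity))
    have h2 := two_rpow_entropy_le_choose hp0 hp1 n
    have h3 : (2 : ℝ) ^ ((R - δ) * n) ≤ numMessages n (R - δ) := Nat.le_ceil _
    have h4 : (2 : ℝ) ^ (δ * n) * 2 ^ n
        = (2 : ℝ) ^ (binaryEntropy p * n) * (2 : ℝ) ^ ((R - δ) * n) := by
      rw [← Real.rpow_natCast 2 n, ← Real.rpow_add (by norm_num), ← Real.rpow_add (by norm_num)]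
      congr 1
      rw [hδ]
      ring
    refine le_of_mul_le_mul_right ?_ (by positivity : (0 : ℝ) < 2 ^ n)
    calc p * (2 : ℝ) ^ (δ * n) * 2 ^ n
        = (p * (2 : ℝ) ^ (binaryEntropy p * n)) * (2 : ℝ) ^ ((R - δ) * n) := by
          rw [mul_assoc, h4, mul_assoc]
      _ ≤ (2 * (n + 1) * n.choose ⌊p * n⌋₊) * numMessages n (R - δ) :=
          mul_le_mul h2 h3 (by positivity) (by positivity)
      _ = 4 * (n + 1) * ((n.choose ⌊p * n⌋₊ : ℝ) * ((1 - 1 / 2) * numMessages n (R - δ))) := by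
          ring
      _ ≤ 4 * (n + 1) * 2 ^ n := mul_le_mul_of_nonneg_left h1 (by positivity)
  have hb : (1 : ℝ) < 2 ^ δ := Real.one_lt_rpow (by norm_num) hδ0
  have hlim := tendsto_pow_const_div_const_pow_of_one_lt 1 hb
  have hev := hlim.eventually (gt_mem_nhds (by positivity : (0 : ℝ) < p / 8))
  obtain ⟨n, hn1, hn2, hn3⟩ :=
    (hev.and ((Filter.eventually_ge_atTop N).and (Filter.eventually_gt_atTop 1))).exists
  have hk := key n hn2
  rw [Real.rpow_mul (by norm_num), Real.rpow_natCast] at hk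
  have hpos : (0 : ℝ) < (2 ^ δ) ^ n := by positivity
  rw [pow_one, div_lt_iff₀ hpos] at hn1
  have : (1 : ℝ) < n := by exact_mod_cast hn3
  linarith

/-- Execute the flips requested by `w` in order, stopping once the budget `K` is exhausted. -/
noncomputable def truncateFlips {n : ℕ} (K : ℝ) (w : Fin n → Bool) (i : Fin n) : Bool :=
  w i && decide (((univ.filter fun j => j ≤ i ∧ w j = true).card : ℝ) ≤ K)

lemma card_truncateFlips_le {n : ℕ} {K : ℝ} (hK : 0 ≤ K) (w : Fin n → Bool) :
    ((univ.filter fun i => truncateFlips K w i = true).card : ℝ) ≤ K := by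
  rcases (univ.filter fun i => truncateFlips K w i = true).eq_empty_or_nonempty with h | h
  · simpa [h] using hK
  · have hmem := Finset.max'_mem _ h
    set m := Finset.max' _ h with hm
    have hm' : w m = true ∧ ((univ.filter fun j => j ≤ m ∧ w j = true).card : ℝ) ≤ K := by
      simpa [truncateFlips] using hmem
    refine le_trans ?_ hm'.2
    norm_cast
    apply card_le_card
    intro i hi
    have hle : i ≤ m := Finset.le_max' _ i hi
    have hwi : w i = true := by
      simp only [truncateFlips, mem_filter, mem_univ, true_and, Bool.and_eq_true] at hi
      exact hi.1
    simp [hle, hwi]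

lemma truncateFlips_eq_self {n : ℕ} {K : ℝ} {w : Fin n → Bool}
    (h : ((univ.filter fun i => w i = true).card : ℝ) ≤ K) : truncateFlips K w = w := by
  funext i
  have : ((univ.filter fun j => j ≤ i ∧ w j = true).card : ℝ) ≤ K := by
    refine le_trans ?_ h
    norm_cast
    apply card_le_card
    intro j hj
    simp only [mem_filter, mem_univ, true_and] at hj ⊢
    exact hj.2
  simp [truncateFlips, this]

/-- The flips requested by the push attack: from position `ℓ` on, wherever `x` and the target `t`
disagree, replace the bit of `x` by that of the coin sequence `s`. -/
def pushFlips {n : ℕ} (ℓ : ℕ) (s t x : Fin n → Bool) (i : Fin n) : Bool :=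
  decide (ℓ ≤ i.1 ∧ x i ≠ t i ∧ x i ≠ s i)

/-- The word received under the push attack with flip budget `K`. -/
noncomputable def pushed {n : ℕ} (ℓ : ℕ) (K : ℝ) (s t x : Fin n → Bool) : Fin n → Bool :=
  fun i => xor (x i) (truncateFlips K (pushFlips ℓ s t x) i)

/-- The coin imbalance between `x` and `t` on the positions where they disagree. -/
def imbalance {n : ℕ} (t x s : Fin n → Bool) : ℝ :=
  ∑ i ∈ univ.filter (fun i => x i ≠ t i), (if s i = x i then 1 else -1 : ℝ)

lemma sum_imbalance_sq {n : ℕ} (t x : Fin n → Bool) :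
    ∑ s, imbalance t x s ^ 2 = hammingDist x t * 2 ^ n := by
  have hpair : ∀ i j : Fin n, ∑ s : Fin n → Bool, (if s i = x i then 1 else -1 : ℝ) *
      (if s j = x j then 1 else -1 : ℝ) = if i = j then 2 ^ n else 0 := by
    intro i j
    split_ifs with hij
    · subst hij
      have : ∀ s : Fin n → Bool, (if s i = x i then 1 else -1 : ℝ) *
          (if s i = x i then 1 else -1 : ℝ) = 1 := by
        intro s
        split_ifs <;> norm_num
      simp [this]
    · let φ : (Fin n → Bool) → Fin n → Bool := fun s => Function.update s i (!s i)
      have hinv : Function.Involutive φ := by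
        intro s
        simp [φ]
      have h := hinv.bijective.sum_comp (fun s : Fin n → Bool =>
        (if s i = x i then 1 else -1 : ℝ) * (if s j = x j then 1 else -1 : ℝ))
      have hneg : ∀ s : Fin n → Bool,
          (if φ s i = x i then 1 else -1 : ℝ) *
            (if φ s j = x j then 1 else -1 : ℝ) =
          -((if s i = x i then 1 else -1 : ℝ) * (if s j = x j then 1 else -1 : ℝ)) := by
        intro s
        have hi : φ s i = !s i := by simp [φ]
        have hj : φ s j = s j := by
          simp [φ, Function.update_of_ne (Ne.symm hij)]
        rw [hi, hj]
        cases s i <;> cases x i <;> split_ifs <;> simp_all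
      simp only [hneg, sum_neg_distrib] at h
      linarith
  simp only [imbalance, sq, sum_mul_sum]
  rw [sum_comm]
  simp_rw [sum_comm (s := (univ : Finset (Fin n → Bool))), hpair]
  rw [hammingDist, ← nsmul_eq_mul]
  refine sum_eq_card_nsmul fun i hi => ?_
  rw [sum_ite_eq, if_pos hi]

lemma imbalance_add_two_mul_card {n : ℕ} (t x s : Fin n → Bool) :
    imbalance t x s + 2 * ((univ.filter fun i => x i ≠ t i ∧ x i ≠ s i).card : ℝ) =
      hammingDist x t := by
  have h1 : ((univ.filter fun i => x i ≠ t i ∧ x i ≠ s i).card : ℝ) =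
      ∑ i ∈ univ.filter (fun i => x i ≠ t i), (if s i = x i then 0 else 1 : ℝ) := by
    rw [← filter_filter, card_filter, Nat.cast_sum]
    refine sum_congr rfl fun i _ => ?_
    by_cases h : s i = x i
    · simp [h]
    · simp [h, Ne.symm h]
  rw [h1, imbalance, mul_sum, ← sum_add_distrib, hammingDist, card_eq_sum_ones, Nat.cast_sum]
  refine sum_congr rfl fun i _ => ?_
  split_ifs <;> norm_num

lemma imbalance_swap {n : ℕ} (t x s : Fin n → Bool) : imbalance x t s = -imbalance t x s := by
  simp only [imbalance, ← sum_neg_distrib]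
  rw [show (univ.filter fun i => t i ≠ x i) = univ.filter fun i => x i ≠ t i by
    ext i; simp [ne_comm]]
  refine sum_congr rfl fun i hi => ?_
  have : x i ≠ t i := by simpa using hi
  revert this
  cases s i <;> cases x i <;> cases t i <;> simp

/-- When the coins are balanced, the push attack completes within budget. -/
lemma pushed_eq {n ℓ : ℕ} {K : ℝ} {s t x : Fin n → Bool}
    (hagree : ∀ i : Fin n, i.1 < ℓ → x i = t i)
    (h : hammingDist x t - imbalance t x s ≤ 2 * K) :
    pushed ℓ K s t x = fun i => if x i = t i then x i else s i := by
  have hpf : pushFlips ℓ s t x = fun i => decide (x i ≠ t i ∧ x i ≠ s i) := by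
    funext i
    have hi : x i ≠ t i → ℓ ≤ i.1 := fun hne => by
      by_contra! hlt
      exact hne (hagree i hlt)
    simp only [pushFlips, decide_eq_decide]
    tauto
  have hcard : ((univ.filter fun i => pushFlips ℓ s t x i = true).card : ℝ) ≤ K := by
    have := imbalance_add_two_mul_card t x s
    simp only [hpf, decide_eq_true_eq]
    linarith
  funext i
  rw [pushed, truncateFlips_eq_self hcard, hpf]
  dsimp only
  generalize x i = a, t i = b, s i = c
  revert a b c
  decide

/-- Averaged over the coins, the push attack confuses any two distinct messages whose codewords
share their first `ℓ` bits and are not too far apart. -/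
lemma DetCode.sum_pushed_err_ge {n : ℕ} {R : ℝ} (C : DetCode n R) {ℓ : ℕ} {K T γ : ℝ}
    (hT : 0 < T) (hγ : 0 < γ) (hTK : T + γ ≤ 2 * K) (hTγ : 2 * T ≤ γ ^ 2)
    (u v : Fin (numMessages n R))
    (hagree : ∀ i : Fin n, i.1 < ℓ → C.enc u i = C.enc v i) :
    (2 : ℝ) ^ n / 2 * (1 - (if u = v then 1 else 0) - hammingDist (C.enc u) (C.enc v) / T) ≤
      ∑ s, ((1 - C.dec (pushed ℓ K s (C.enc v) (C.enc u)) u) +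
        (1 - C.dec (pushed ℓ K s (C.enc u) (C.enc v)) v)) := by
  have hnn : ∀ s, 0 ≤ (1 - C.dec (pushed ℓ K s (C.enc v) (C.enc u)) u) +
      (1 - C.dec (pushed ℓ K s (C.enc u) (C.enc v)) v) := fun s => by
    linarith [C.dec_le_one (pushed ℓ K s (C.enc v) (C.enc u)) u,
      C.dec_le_one (pushed ℓ K s (C.enc u) (C.enc v)) v]
  have hP : (0 : ℝ) < 2 ^ n := by positivity
  set d : ℝ := (hammingDist (C.enc u) (C.enc v) : ℝ) with hd
  have hd0 : 0 ≤ d := Nat.cast_nonneg _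
  have hdT0 : 0 ≤ d / T := by positivity
  by_cases huv : u = v
  · refine le_trans ?_ (sum_nonneg fun s _ => hnn s)
    simp only [huv, if_true]
    nlinarith
  rcases lt_or_ge T d with hlt | hle
  · refine le_trans ?_ (sum_nonneg fun s _ => hnn s)
    have : 1 < d / T := (one_lt_div hT).mpr hlt
    simp only [huv, if_false]
    nlinarith
  have hpt : ∀ s, 1 - imbalance (C.enc v) (C.enc u) s ^ 2 / γ ^ 2 ≤
      (1 - C.dec (pushed ℓ K s (C.enc v) (C.enc u)) u) +
        (1 - C.dec (pushed ℓ K s (C.enc u) (C.enc v)) v) := by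
    intro s
    set z := imbalance (C.enc v) (C.enc u) s with hz
    rcases le_or_gt (|z|) γ with hzγ | hzγ
    · obtain ⟨hz1, hz2⟩ := abs_le.mp hzγ
      have e1 := pushed_eq (K := K) (s := s) hagree (by rw [← hz, ← hd]; linarith)
      have e2 := pushed_eq (K := K) (s := s) (fun i hi => (hagree i hi).symm)
        (by rw [imbalance_swap, ← hz, hammingDist_comm, ← hd]; linarith)
      have e3 : (fun i => if C.enc v i = C.enc u i then C.enc v i else s i) =
          fun i => if C.enc u i = C.enc v i then C.enc u i else s i := by
        funext i
        by_cases h : C.enc u i = C.enc v i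
        · simp [h]
        · simp [h, Ne.symm h]
      rw [e1, e2, e3]
      have hsum : C.dec (fun i => if C.enc u i = C.enc v i then C.enc u i else s i) u +
          C.dec (fun i => if C.enc u i = C.enc v i then C.enc u i else s i) v ≤ 1 := by
        rw [← C.dec_sum (fun i => if C.enc u i = C.enc v i then C.enc u i else s i),
          ← sum_pair huv]
        exact sum_le_sum_of_subset_of_nonneg (subset_univ _) (fun _ _ _ => C.dec_nonneg _ _)
      have : 0 ≤ z ^ 2 / γ ^ 2 := by positivity
      linarith
    · refine le_trans ?_ (hnn s)
      have : γ ^ 2 ≤ z ^ 2 := by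
        rw [← sq_abs z]
        exact pow_le_pow_left₀ hγ.le hzγ.le 2
      have : 1 ≤ z ^ 2 / γ ^ 2 := (one_le_div (by positivity)).mpr this
      linarith
  refine le_trans ?_ (sum_le_sum fun s _ => hpt s)
  rw [sum_sub_distrib, ← sum_div, sum_imbalance_sq, ← hd]
  simp only [huv, if_false, sum_const, card_univ, Fintype.card_fun, Fintype.card_bool,
    Fintype.card_fin, nsmul_eq_mul, mul_one, Nat.cast_pow, Nat.cast_ofNat]
  have h1 : d / γ ^ 2 ≤ 1 / 2 := by
    rw [div_le_div_iff₀ (by positivity) (by norm_num)]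
    linarith
  rw [mul_div_right_comm]
  nlinarith

/-- Plotkin-type bound: average distance of words sharing their first `ℓ` bits. -/
lemma sum_hammingDist_le {α : Type*} {n ℓ : ℕ} (V : Finset α) (e : α → Fin n → Bool)
    (hagree : ∀ u ∈ V, ∀ v ∈ V, ∀ i : Fin n, i.1 < ℓ → e u i = e v i) :
    ∑ u ∈ V, ∑ v ∈ V, (hammingDist (e u) (e v) : ℝ) ≤
      (V.card : ℝ) ^ 2 * ((n - ℓ : ℕ) : ℝ) / 2 := by
  have hcoord : ∀ i : Fin n, ∑ u ∈ V, ∑ v ∈ V, (if e u i ≠ e v i then 1 else 0 : ℝ) ≤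
      if ℓ ≤ i.1 then (V.card : ℝ) ^ 2 / 2 else 0 := by
    intro i
    split_ifs with hi
    · have h1 : ∀ u v, (if e u i ≠ e v i then 1 else 0 : ℝ) =
          (1 - (if e u i then 1 else -1) * (if e v i then 1 else -1)) / 2 := by
        intro u v
        cases e u i <;> cases e v i <;> norm_num
      simp_rw [h1, ← sum_div, sum_sub_distrib]
      rw [← sum_mul_sum]
      have := mul_self_nonneg (∑ u ∈ V, (if e u i then 1 else -1 : ℝ))
      simp only [sum_const, nsmul_eq_mul, mul_one]
      linarith
    · refine (sum_eq_zero fun u hu => sum_eq_zero fun v hv => ?_).le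
      simp [hagree u hu v hv i (by omega)]
  have hd : ∀ u v, (hammingDist (e u) (e v) : ℝ) =
      ∑ i, (if e u i ≠ e v i then 1 else 0 : ℝ) := by
    intro u v
    rw [hammingDist, card_filter, Nat.cast_sum]
    simp
  have hcard : (univ.filter fun i : Fin n => ℓ ≤ i.1).card = n - ℓ := by
    have h := Fin.card_filter_val_lt (n := n) (m := ℓ)
    have h2 := card_filter_add_card_filter_not (s := (univ : Finset (Fin n))) (fun i => i.1 < ℓ)
    simp only [not_lt, card_univ, Fintype.card_fin] at h2
    omega
  calc ∑ u ∈ V, ∑ v ∈ V, (hammingDist (e u) (e v) : ℝ)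
      = ∑ i, ∑ u ∈ V, ∑ v ∈ V, (if e u i ≠ e v i then 1 else 0 : ℝ) := by
        simp_rw [hd, sum_comm (t := (univ : Finset (Fin n)))]
    _ ≤ ∑ i : Fin n, if ℓ ≤ i.1 then (V.card : ℝ) ^ 2 / 2 else 0 :=
        sum_le_sum fun i _ => hcoord i
    _ = _ := by
        rw [← sum_filter, sum_const, hcard, nsmul_eq_mul]
        ring

/-- The first `ℓ` bits of a word, padded by `false`. -/
def prefixKey {n : ℕ} (ℓ : ℕ) (x : Fin n → Bool) : Fin ℓ → Bool :=
  fun k => if h : k.1 < n then x ⟨k.1, h⟩ else false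

lemma eq_of_prefixKey_eq {n ℓ : ℕ} {x x' : Fin n → Bool} (h : prefixKey ℓ x = prefixKey ℓ x')
    (i : Fin n) (hi : i.1 < ℓ) : x i = x' i := by
  simpa [prefixKey] using congrFun h ⟨i.1, hi⟩

/-- For fixed coins, a target word chosen from the observed prefix gives a causal attack. -/
lemma DetCode.sum_pushed_err_le {n : ℕ} {R p ε : ℝ} (hp : 0 ≤ p) (C : DetCode n R)
    (hC : ∀ A : CausalAdversary n p, C.errProb A ≤ ε) (ℓ : ℕ) (s : Fin n → Bool)
    (t : (Fin ℓ → Bool) → Fin n → Bool) :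
    ∑ u, (1 - C.dec (pushed ℓ (p * n) s (t (prefixKey ℓ (C.enc u))) (C.enc u)) u) ≤
      ε * numMessages n R := by
  refine C.sum_err_le_of_causal hC
    (fun x => truncateFlips (p * n) (pushFlips ℓ s (t (prefixKey ℓ x)) x)) ?_
    (fun x => card_truncateFlips_le (by positivity) _)
  intro x x' i hx
  have hflip : ∀ j ≤ i, pushFlips ℓ s (t (prefixKey ℓ x)) x j =
      pushFlips ℓ s (t (prefixKey ℓ x')) x' j := by
    intro j hj
    by_cases hℓ : ℓ ≤ j.1
    · have hkey : prefixKey ℓ x = prefixKey ℓ x' := by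
        funext k
        unfold prefixKey
        split_ifs with h
        · apply hx
          have := k.isLt
          have hj' : j.1 ≤ i.1 := hj
          exact Fin.mk_le_of_le_val (by omega)
        · rfl
      simp only [pushFlips, hkey, hx j hj]
    · simp [pushFlips, hℓ]
  have hset : (univ.filter fun j => j ≤ i ∧ pushFlips ℓ s (t (prefixKey ℓ x)) x j = true) =
      univ.filter fun j => j ≤ i ∧ pushFlips ℓ s (t (prefixKey ℓ x')) x' j = true := by
    ext j
    simp only [mem_filter, mem_univ, true_and]
    exact and_congr_right fun hj => by rw [hflip j hj]
  simp only [truncateFlips, hset, hflip i le_rfl]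

/-- Lower bound on the error caused by the wait-and-push attack. -/
lemma DetCode.messages_le_of_push {n : ℕ} {R p ε : ℝ} (hp : 0 ≤ p) (C : DetCode n R)
    (hC : ∀ A : CausalAdversary n p, C.errProb A ≤ ε) (ℓ : ℕ) {T γ : ℝ}
    (hT : 0 < T) (hγ : 0 < γ) (hTK : T + γ ≤ 2 * (p * n)) (hTγ : 2 * T ≤ γ ^ 2) :
    (numMessages n R : ℝ) * (1 - ((n - ℓ : ℕ) : ℝ) / (2 * T)) - 2 ^ ℓ ≤
      4 * (ε * numMessages n R) := by
  classical
  set F : (Fin n → Bool) → Fin (numMessages n R) → Fin (numMessages n R) → ℝ :=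
    fun s u v => 1 - C.dec (pushed ℓ (p * n) s (C.enc v) (C.enc u)) u with hF
  set V : (Fin ℓ → Bool) → Finset (Fin (numMessages n R)) :=
    fun k => univ.filter fun u => prefixKey ℓ (C.enc u) = k with hV
  have hVmem : ∀ k u, u ∈ V k ↔ prefixKey ℓ (C.enc u) = k := fun k u => by simp [hV]
  set c : ℝ := ((n - ℓ : ℕ) : ℝ) / (2 * T) with hc
  have hagree : ∀ k, ∀ u ∈ V k, ∀ v ∈ V k, ∀ i : Fin n, i.1 < ℓ → C.enc u i = C.enc v i := by
    intro k u hu v hv i hi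
    rw [hVmem] at hu hv
    exact eq_of_prefixKey_eq (hu.trans hv.symm) i hi
  -- the average error inside one prefix class
  have hclass : ∀ k, (2 : ℝ) ^ n / 4 * ((V k).card * ((V k).card * (1 - c) - 1)) ≤
      ∑ s, ∑ v ∈ V k, ∑ u ∈ V k, F s u v := by
    intro k
    have hlow := sum_le_sum fun u (hu : u ∈ V k) => sum_le_sum fun v (hv : v ∈ V k) =>
      C.sum_pushed_err_ge (K := p * n) hT hγ hTK hTγ u v (hagree k u hu v hv)
    have hup : ∑ u ∈ V k, ∑ v ∈ V k, ∑ s, (F s u v + F s v u) =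
        2 * ∑ s, ∑ v ∈ V k, ∑ u ∈ V k, F s u v := by
      have e1 : ∑ u ∈ V k, ∑ v ∈ V k, ∑ s, F s u v = ∑ s, ∑ v ∈ V k, ∑ u ∈ V k, F s u v := by
        rw [sum_comm]
        simp_rw [sum_comm (t := (univ : Finset (Fin n → Bool)))]
      have e2 : ∑ u ∈ V k, ∑ v ∈ V k, ∑ s, F s v u = ∑ s, ∑ v ∈ V k, ∑ u ∈ V k, F s u v := by
        simp_rw [sum_comm (t := (univ : Finset (Fin n → Bool)))]
      simp_rw [sum_add_distrib]
      rw [e1, e2]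
      ring
    have hplot := sum_hammingDist_le (V k) C.enc (hagree k)
    have hdist : ∑ u ∈ V k, ∑ v ∈ V k, (hammingDist (C.enc u) (C.enc v) : ℝ) / T ≤
        (V k).card ^ 2 * c := by
      simp_rw [← sum_div]
      rw [div_le_iff₀ hT, hc]
      refine hplot.trans (le_of_eq ?_)
      field_simp
    have hexp : ∑ u ∈ V k, ∑ v ∈ V k, (2 : ℝ) ^ n / 2 *
        (1 - (if u = v then 1 else 0) - hammingDist (C.enc u) (C.enc v) / T) =
        (2 : ℝ) ^ n / 2 * ((V k).card ^ 2 - (V k).card -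
          ∑ u ∈ V k, ∑ v ∈ V k, (hammingDist (C.enc u) (C.enc v) : ℝ) / T) := by
      simp_rw [← mul_sum, sum_sub_distrib]
      congr 1
      simp only [sum_const, nsmul_eq_mul, mul_one, sum_ite_eq, sum_ite_mem, inter_self]
      ring
    rw [hexp] at hlow
    have hlow' := hlow.trans_eq hup
    have hP : (0 : ℝ) < 2 ^ n := by positivity
    nlinarith
  -- the best target for each prefix, for fixed coins
  have htarget : ∀ s k, ∃ t : Fin n → Bool, ∑ v ∈ V k, ∑ u ∈ V k, F s u v ≤
      (V k).card * ∑ u ∈ V k, (1 - C.dec (pushed ℓ (p * n) s t (C.enc u)) u) := by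
    intro s k
    rcases (V k).eq_empty_or_nonempty with h | h
    · exact ⟨fun _ => false, by simp [h]⟩
    · obtain ⟨v, hv, hmax⟩ := exists_max_image (V k) (fun v => ∑ u ∈ V k, F s u v) h
      refine ⟨C.enc v, ?_⟩
      rw [← nsmul_eq_mul]
      exact sum_le_card_nsmul _ _ _ hmax
  choose t ht using htarget
  have hfib : ∀ s, ∑ k, ∑ u ∈ V k, (1 - C.dec (pushed ℓ (p * n) s (t s k) (C.enc u)) u) ≤
      ε * numMessages n R := by
    intro s
    refine le_of_eq_of_le ?_ (C.sum_pushed_err_le hp hC ℓ s (t s))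
    rw [← sum_fiberwise (s := univ) (g := fun u => prefixKey ℓ (C.enc u))]
    refine sum_congr rfl fun k _ => sum_congr rfl fun u hu => ?_
    rw [(hVmem k u).mp hu]
  have hk : ∀ k, (2 : ℝ) ^ n / 4 * ((V k).card * (1 - c) - 1) ≤
      ∑ s, ∑ u ∈ V k, (1 - C.dec (pushed ℓ (p * n) s (t s k) (C.enc u)) u) := by
    intro k
    rcases (V k).eq_empty_or_nonempty with h | h
    · simp only [h, card_empty, Nat.cast_zero, zero_mul, sum_empty, sum_const_zero]
      linarith [(by positivity : (0 : ℝ) < 2 ^ n)]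
    · have hpos : (0 : ℝ) < (V k).card := by exact_mod_cast h.card_pos
      refine le_of_mul_le_mul_left ?_ hpos
      rw [mul_sum]
      refine le_trans (le_of_eq ?_) ((hclass k).trans (sum_le_sum fun s _ => ht s k))
      ring
  have htot := (sum_le_sum fun k (_ : k ∈ univ) => hk k).trans
    (sum_comm.trans_le (sum_le_sum fun s (_ : s ∈ univ) => hfib s))
  have hM : ∑ k, ((V k).card : ℝ) = numMessages n R := by
    have := card_eq_sum_card_fiberwise (s := (univ : Finset (Fin (numMessages n R))))
      (t := univ) (f := fun u => prefixKey ℓ (C.enc u)) (fun _ _ => by simp)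
    rw [card_univ, Fintype.card_fin] at this
    exact_mod_cast this.symm
  rw [← mul_sum, sum_sub_distrib, ← sum_mul, hM] at htot
  simp only [sum_const, card_univ, Fintype.card_fun, Fintype.card_bool,
    Fintype.card_fin, nsmul_eq_mul, mul_one, Nat.cast_pow, Nat.cast_ofNat] at htot
  have hP : (0 : ℝ) < 2 ^ n := by positivity
  refine le_of_mul_le_mul_left ?_ hP
  linarith

lemma rate_le_max_one_sub_four_mul {p R : ℝ} (hp0 : 0 < p) (hp1 : p < 1 / 2)
    (hach : weaklyAchievableDet p R) : R ≤ max (1 - 4 * p) 0 := by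
  by_contra! hlt
  set α := max (1 - 4 * p) 0 with hα
  have hα1 : 1 - 4 * p ≤ α := le_max_left _ _
  have hα0 : 0 ≤ α := le_max_right _ _
  set δ := min ((R - α) / 2) p with hδ
  have hδ0 : 0 < δ := lt_min (by linarith) hp0
  have hδ1 : δ ≤ (R - α) / 2 := min_le_left _ _
  have hδ2 : δ ≤ p := min_le_right _ _
  obtain ⟨N, hN⟩ := hach (δ / (128 * p)) (by positivity) δ hδ0
  have hb1 : (2 : ℝ) ^ (-(δ / 2)) < 1 :=
    Real.rpow_lt_one_of_one_lt_of_neg (by norm_num) (by linarith)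
  have hlim := tendsto_pow_atTop_nhds_zero_of_lt_one
    (by positivity : (0 : ℝ) ≤ (2 : ℝ) ^ (-(δ / 2))) hb1
  have hev := hlim.eventually (gt_mem_nhds (by positivity : (0 : ℝ) < δ / (128 * p)))
  obtain ⟨n, hn1, hn2, hn3⟩ := (hev.and ((Filter.eventually_ge_atTop N).and
    (tendsto_natCast_atTop_atTop.eventually_gt_atTop (128 / δ ^ 2)))).exists
  obtain ⟨C, hC⟩ := hN n hn2
  have hn0 : (0 : ℝ) < n := lt_trans (by positivity) hn3
  set ℓ := ⌈(α + δ / 2) * n⌉₊ with hℓ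
  have hℓ1 : (α + δ / 2) * n ≤ ℓ := Nat.le_ceil _
  have hℓ2 : (ℓ : ℝ) ≤ (α + δ / 2) * n + 1 := (Nat.ceil_lt_add_one (by positivity)).le
  have hTpos : 0 < (2 * p - δ / 8) * n := mul_pos (by linarith) hn0
  have hmain := C.messages_le_of_push hp0.le hC ℓ (T := (2 * p - δ / 8) * n) (γ := δ / 8 * n)
    hTpos (by positivity) (by linarith) (by
      rw [div_lt_iff₀ (by positivity)] at hn3
      nlinarith)
  set M : ℝ := (numMessages n (R - δ) : ℝ) with hM
  have hMlow : (2 : ℝ) ^ ((α + δ) * n) ≤ M := by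
    refine le_trans ?_ (Nat.le_ceil _)
    apply Real.rpow_le_rpow_of_exponent_le (by norm_num)
    exact mul_le_mul_of_nonneg_right (by linarith) hn0.le
  have hMpos : 0 < M := lt_of_lt_of_le (by positivity) hMlow
  have hpre : (2 : ℝ) ^ ℓ ≤ 2 * (δ / (128 * p)) * M := by
    have h1 : (2 : ℝ) ^ ℓ ≤ 2 * ((2 : ℝ) ^ (-(δ / 2))) ^ n * (2 : ℝ) ^ ((α + δ) * n) := by
      rw [← Real.rpow_natCast, ← Real.rpow_natCast (_ ^ _), ← Real.rpow_mul (by norm_num)]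
      nth_rewrite 2 [← Real.rpow_one 2]
      rw [← Real.rpow_add (by norm_num), ← Real.rpow_add (by norm_num)]
      apply Real.rpow_le_rpow_of_exponent_le (by norm_num)
      linarith
    refine h1.trans (mul_le_mul ?_ hMlow (by positivity) (by positivity))
    linarith
  have hm : ((n - ℓ : ℕ) : ℝ) / (2 * ((2 * p - δ / 8) * n)) ≤ 1 - δ / (16 * p) := by
    have h1 : ((n - ℓ : ℕ) : ℝ) ≤ (4 * p - δ / 2) * n := by
      rcases le_or_gt ℓ n with h | h
      · rw [Nat.cast_sub h]
        nlinarith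
      · rw [Nat.sub_eq_zero_of_le h.le, Nat.cast_zero]
        exact mul_nonneg (by linarith) hn0.le
    rw [div_le_iff₀ (by positivity)]
    refine h1.trans ?_
    have h2 : 4 * p - δ / 2 ≤ (1 - δ / (16 * p)) * (2 * (2 * p - δ / 8)) := by
      have : (1 - δ / (16 * p)) * (2 * (2 * p - δ / 8)) =
          4 * p - δ / 2 + δ ^ 2 / (64 * p) := by
        field_simp
        ring
      rw [this]
      have : 0 ≤ δ ^ 2 / (64 * p) := by positivity
      linarith
    calc _ ≤ (1 - δ / (16 * p)) * (2 * (2 * p - δ / 8)) * n :=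
          mul_le_mul_of_nonneg_right h2 hn0.le
      _ = _ := by ring
  have e : δ / (16 * p) = 8 * (δ / (128 * p)) := by
    field_simp
    norm_num
  set η := δ / (128 * p) with hη
  have hη0 : 0 < η := by positivity
  have : M * (8 * η) ≤
      M * (1 - ((n - ℓ : ℕ) : ℝ) / (2 * ((2 * p - δ / 8) * n))) :=
    mul_le_mul_of_nonneg_left (by linarith) hMpos.le
  nlinarith [mul_pos hη0 hMpos]

/-- Theorem 1: for every `p ∈ (0, 1/2)`, every rate `R ≥ 0` weakly achievable by
deterministic codes against causal adversaries with power `p` satisfies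
`R ≤ min {1 − H(p), (1 − 4p)⁺}`. -/
theorem det_weak_capacity_upper_bound (p : ℝ) (hp0 : 0 < p) (hp1 : p < 1 / 2)
    (R : ℝ) (hR : 0 ≤ R) (hach : weaklyAchievableDet p R) :
    R ≤ min (1 - binaryEntropy p) (max (1 - 4 * p) 0) := by
  exact le_min (rate_le_one_sub_entropy hp0 hp1 hach) (rate_le_max_one_sub_four_mul hp0 hp1 hach)
end

section
/- For every p ∈ (0, 1/2] and every ε > 0 there exists N such that for every n ≥ N the following holds: for every deterministic (n, Rn)-code with rate R = max(1 − 4p, 0) + ε, there exists a causal adversary with power p against which the probability of error of the code is at least ε/(512p). (Quantitative form of Theorem 1, the (1−4p)^+ converse for deterministic codes.) -/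
open Finset

/-- The number of positions before `i` at which `x` and `x'` differ. -/
def diffRank {n : ℕ} (x x' : Fin n → Bool) (i : Fin n) : ℕ :=
  #{k | k < i ∧ x k ≠ x' k}

/-- The indicator of the positions where `x` and `x'` differ and whose rank among all such positions
lies in `[0, K)` (if `b` is true) or in `[K, 2 * K)` (if `b` is false). -/
def pushFlip {n : ℕ} (K : ℕ) (b : Bool) (x x' : Fin n → Bool) (i : Fin n) : Bool :=
  decide (x i ≠ x' i ∧
    diffRank x x' i ∈ if b then Finset.Ico 0 K else Finset.Ico K (2 * K))

lemma diffRank_comm {n : ℕ} (x x' : Fin n → Bool) (i : Fin n) :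
    diffRank x x' i = diffRank x' x i := by
  simp only [diffRank, ne_comm]

lemma diffRank_lt_diffRank {n : ℕ} {x x' : Fin n → Bool} {i j : Fin n} (hij : i < j)
    (hi : x i ≠ x' i) : diffRank x x' i < diffRank x x' j := by
  apply Finset.card_lt_card
  rw [Finset.ssubset_iff_of_subset]
  · exact ⟨i, by simp [hij, hi], by simp⟩
  · intro k
    simp only [mem_filter, mem_univ, true_and]
    exact fun h => ⟨h.1.trans hij, h.2⟩

lemma diffRank_lt_hammingDist {n : ℕ} {x x' : Fin n → Bool} {i : Fin n} (hi : x i ≠ x' i) :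
    diffRank x x' i < hammingDist x x' := by
  apply Finset.card_lt_card
  rw [Finset.ssubset_iff_of_subset]
  · exact ⟨i, by simp [hi], by simp⟩
  · intro k
    simp only [mem_filter, mem_univ, true_and]
    exact fun h => h.2

lemma card_pushFlip_le {n : ℕ} (K : ℕ) (b : Bool) (x x' : Fin n → Bool) :
    #{i | pushFlip K b x x' i = true} ≤ K := by
  have hinj : Set.InjOn (diffRank x x')
      (({i | pushFlip K b x x' i = true} : Finset (Fin n)) : Set (Fin n)) := by
    intro i hi j hj hij
    simp only [pushFlip, coe_filter, mem_univ, true_and, Set.mem_ofPred_eq,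
      decide_eq_true_eq] at hi hj
    rcases lt_trichotomy i j with h | h | h
    · exact absurd hij (diffRank_lt_diffRank h hi.1).ne
    · exact h
    · exact absurd hij (diffRank_lt_diffRank h hj.1).ne'
  rw [← Finset.card_image_of_injOn hinj]
  have hsub : ∀ a : ℕ, (∀ i, pushFlip K b x x' i = true → diffRank x x' i ∈ Finset.Ico a (a + K)) →
      #(Finset.image (diffRank x x') {i | pushFlip K b x x' i = true}) ≤ K := by
    intro a ha
    refine (Finset.card_le_card (t := Finset.Ico a (a + K)) ?_).trans (by simp)
    intro r hr
    simp only [mem_image, mem_filter, mem_univ, true_and] at hr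
    obtain ⟨i, hi, rfl⟩ := hr
    exact ha i hi
  cases b
  · apply hsub K
    intro i hi
    simp only [pushFlip, decide_eq_true_eq] at hi
    have := hi.2
    simp at this
    simp; omega
  · apply hsub 0
    intro i hi
    simp only [pushFlip, decide_eq_true_eq] at hi
    have := hi.2
    simp at this
    simp; omega

lemma xor_pushFlip_comm {n K : ℕ} (b : Bool) {x x' : Fin n → Bool}
    (h : hammingDist x x' ≤ 2 * K) (i : Fin n) :
    xor (x i) (pushFlip K b x x' i) = xor (x' i) (pushFlip K (!b) x' x i) := by
  by_cases hi : x i = x' i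
  · simp [pushFlip, hi]
  · have hr := (diffRank_lt_hammingDist hi).trans_le h
    have hx : x' i = !(x i) := by
      cases hxi : x i <;> cases hxi' : x' i <;> simp_all
    rw [pushFlip, pushFlip, diffRank_comm x' x]
    cases b <;> rcases lt_or_ge (diffRank x x' i) K with h1 | h1 <;>
      simp [hx, hr, h1, not_le.mpr, not_lt.mpr]

/-- The restriction of a word to its first `m` entries. -/
def headWord {n m : ℕ} (hm : m ≤ n) (x : Fin n → Bool) : Fin m → Bool :=
  fun k => x (Fin.castLE hm k)

/-- A causal jamming rule on whole words that flips at most `p * n` entries is realized by a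
causal adversary without randomness. -/
lemma exists_causalAdversary {n : ℕ} {p : ℝ} (G : (Fin n → Bool) → Fin n → Bool)
    (hcausal : ∀ x x' i, (∀ k ≤ i, x k = x' k) → G x i = G x' i)
    (hpower : ∀ x, ((#{i | G x i = true} : ℕ) : ℝ) ≤ p * n) :
    ∃ A : CausalAdversary n p, ∀ (F : (Fin n → Bool) → ℝ) (x : Fin n → Bool),
      ∑ j, A.μ j * F (A.received x j) = F (fun i => xor (x i) (G x i)) := by
  let ext : (i : Fin n) → (Fin (i.1 + 1) → Bool) → Fin n → Bool := fun i w k =>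
    if h : k.1 < i.1 + 1 then w ⟨k.1, h⟩ else false
  have hext : ∀ x i, G (ext i (wordPrefix x i)) i = G x i := by
    intro x i
    apply hcausal
    intro k hk
    have : k.1 < i.1 + 1 := Nat.lt_succ_of_le hk
    simp only [ext, wordPrefix, dif_pos this]
  refine ⟨{ J := Unit, μ := fun _ => 1, μ_nonneg := by simp, μ_sum := by simp,
            g := fun i w _ => G (ext i w) i, power := ?_ }, ?_⟩
  · intro x _
    simp only [hext]
    exact hpower x
  · intro F x
    simp only [univ_unique, sum_singleton, one_mul]
    congr 1
    funext i
    simp only [CausalAdversary.received, hext]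

/-- The number of ordered pairs on which a Boolean function disagrees is at most half of all. -/
lemma sum_sum_ne_le {ι : Type*} (T : Finset ι) (f : ι → Bool) :
    ∑ u ∈ T, ∑ v ∈ T, (if f u ≠ f v then (1 : ℝ) else 0) ≤ (#T : ℝ) ^ 2 / 2 := by
  let s : ι → ℝ := fun u => if f u then 1 else -1
  have hs : ∀ u v, (if f u ≠ f v then (1 : ℝ) else 0) = 1 / 2 - s u * s v / 2 := by
    intro u v
    cases hu : f u <;> cases hv : f v <;> norm_num [s, hu, hv]
  have hprod : ∑ u ∈ T, ∑ v ∈ T, s u * s v = (∑ u ∈ T, s u) ^ 2 := by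
    rw [sq, Finset.sum_mul_sum]
  simp only [hs, Finset.sum_sub_distrib, ← Finset.sum_div, hprod]
  simp only [sum_const, nsmul_eq_mul]
  nlinarith [sq_nonneg (∑ u ∈ T, s u)]

/-- Plotkin-type bound for words with a common head of length `m`. -/
lemma sum_sum_hammingDist_le {ι : Type*} {n m : ℕ} (hm : m ≤ n) (T : Finset ι)
    (x : ι → Fin n → Bool) (w : Fin m → Bool) (hT : ∀ u ∈ T, headWord hm (x u) = w) :
    ∑ u ∈ T, ∑ v ∈ T, (hammingDist (x u) (x v) : ℝ) ≤ ((n : ℝ) - m) * ((#T : ℝ) ^ 2 / 2) := by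
  have hd : ∀ u v, (hammingDist (x u) (x v) : ℝ) =
      ∑ i, (if x u i ≠ x v i then (1 : ℝ) else 0) := by
    intro u v
    rw [Finset.sum_boole, hammingDist]
  have hswap : ∑ u ∈ T, ∑ v ∈ T, (hammingDist (x u) (x v) : ℝ) =
      ∑ i, ∑ u ∈ T, ∑ v ∈ T, (if x u i ≠ x v i then (1 : ℝ) else 0) := by
    simp only [hd]
    rw [Finset.sum_comm]
    rw [Finset.sum_comm]
    rw [Finset.sum_congr rfl fun u _ => Finset.sum_comm, Finset.sum_comm]
  have hle : ∀ i : Fin n, ∑ u ∈ T, ∑ v ∈ T, (if x u i ≠ x v i then (1 : ℝ) else 0) ≤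
      (if m ≤ i.1 then 1 else 0) * ((#T : ℝ) ^ 2 / 2) := by
    intro i
    split_ifs with hi
    · rw [one_mul]
      exact sum_sum_ne_le T fun u => x u i
    · rw [zero_mul]
      refine (Finset.sum_eq_zero fun u hu => Finset.sum_eq_zero fun v hv => ?_).le
      have h := congrFun ((hT u hu).trans (hT v hv).symm) ⟨i.1, not_le.mp hi⟩
      simp only [headWord, Fin.castLE_mk, Fin.eta] at h
      simp [h]
  have hcount : ∑ i : Fin n, (if m ≤ i.1 then (1 : ℝ) else 0) = (n : ℝ) - m := by
    rw [Fin.sum_univ_eq_sum_range (fun i => if m ≤ i then (1 : ℝ) else 0) n]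
    rw [← Finset.sum_filter, Finset.sum_const, nsmul_eq_mul, mul_one, ← Nat.cast_sub hm]
    congr 1
    rw [← Nat.card_Ico]
    congr 1
    ext k
    simp [and_comm]
  rw [hswap]
  refine (Finset.sum_le_sum fun i _ => hle i).trans ?_
  rw [← Finset.sum_mul, hcount]

/-- Among the words with head `w` there is a target towards which pushing confuses the decoder
on a constant fraction of these words. -/
lemma exists_confusing_target {ι : Type*} [Nonempty ι] {n m : ℕ} (K : ℕ) (hm : m ≤ n)
    (T : Finset ι) (x : ι → Fin n → Bool) (w : Fin m → Bool)
    (hT : ∀ u ∈ T, headWord hm (x u) = w) (q : (Fin n → Bool) → ι → ℝ)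
    (hq : ∀ y u, q y u ≤ 1) (hqq : ∀ y u v, u ≠ v → q y u + q y v ≤ 1) :
    ∃ (v : ι) (b : Bool), (T.Nonempty → v ∈ T) ∧
      ((1 - ((n : ℝ) - m) / (4 * K + 2)) * #T - 1) / 2 ≤
        ∑ u ∈ T, (1 - q (fun i => xor (x u i) (pushFlip K b (x u) (x v) i)) u) := by
  classical
  rcases T.eq_empty_or_nonempty with rfl | hne
  · exact ⟨Classical.arbitrary ι, true, by simp, by norm_num⟩
  let e : ι → ι → Bool → ℝ := fun u v b =>
    1 - q (fun i => xor (x u i) (pushFlip K b (x u) (x v) i)) u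
  have hK : (0 : ℝ) < 2 * K + 1 := by positivity
  have he : ∀ u v b, 0 ≤ e u v b := fun u v b => sub_nonneg.mpr (hq _ _)
  have hpair : ∀ u v b, 1 - (if u = v then 1 else 0) -
      (hammingDist (x u) (x v) : ℝ) / (2 * K + 1) ≤ e u v b + e v u (!b) := by
    intro u v b
    have hnn := add_nonneg (he u v b) (he v u (!b))
    have hd : (0 : ℝ) ≤ (hammingDist (x u) (x v) : ℝ) / (2 * K + 1) := by positivity
    by_cases huv : u = v
    · rw [if_pos huv]; linarith
    rw [if_neg huv]
    by_cases hle : hammingDist (x u) (x v) ≤ 2 * K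
    · have hy : (fun i => xor (x v i) (pushFlip K (!b) (x v) (x u) i)) =
          fun i => xor (x u i) (pushFlip K b (x u) (x v) i) :=
        funext fun i => (xor_pushFlip_comm b hle i).symm
      have := hqq (fun i => xor (x u i) (pushFlip K b (x u) (x v) i)) u v huv
      simp only [e, hy]
      linarith
    · have h1 : (2 * K + 1 : ℝ) ≤ hammingDist (x u) (x v) := by
        exact_mod_cast not_le.mp hle
      have := (one_le_div hK).mpr h1
      linarith
  have hcomm : ∑ u ∈ T, ∑ v ∈ T, ∑ b, e v u (!b) = ∑ u ∈ T, ∑ v ∈ T, ∑ b, e u v b := by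
    rw [Finset.sum_comm]
    refine Finset.sum_congr rfl fun u _ => Finset.sum_congr rfl fun v _ => ?_
    simp [add_comm]
  have hlow : ∑ u ∈ T, ∑ v ∈ T, ∑ _b : Bool, (1 - (if u = v then 1 else 0) -
      (hammingDist (x u) (x v) : ℝ) / (2 * K + 1)) ≤ 2 * ∑ u ∈ T, ∑ v ∈ T, ∑ b, e u v b := by
    calc _ ≤ ∑ u ∈ T, ∑ v ∈ T, ∑ b, (e u v b + e v u (!b)) :=
          Finset.sum_le_sum fun u _ => Finset.sum_le_sum fun v _ =>
            Finset.sum_le_sum fun b _ => hpair u v b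
      _ = _ := by
          simp only [Finset.sum_add_distrib] at hcomm ⊢
          rw [hcomm]; ring
  have hval : ∑ u ∈ T, ∑ v ∈ T, ∑ _b : Bool, (1 - (if u = v then 1 else 0) -
      (hammingDist (x u) (x v) : ℝ) / (2 * K + 1)) =
      2 * ((#T : ℝ) ^ 2 - #T -
        (∑ u ∈ T, ∑ v ∈ T, (hammingDist (x u) (x v) : ℝ)) / (2 * K + 1)) := by
    simp only [Finset.sum_const, Finset.card_univ, Fintype.card_bool, nsmul_eq_mul,
      ← Finset.mul_sum, Finset.sum_sub_distrib, ← Finset.sum_div]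
    rw [Finset.sum_congr rfl fun u hu => by rw [Finset.sum_ite_eq, if_pos hu]]
    simp only [Finset.sum_const, nsmul_eq_mul]
    push_cast
    ring
  have hplot := div_le_div_of_nonneg_right (sum_sum_hammingDist_le hm T x w hT) hK.le
  have hcard : (0 : ℝ) < #T := by exact_mod_cast hne.card_pos
  have havg : ∑ _z ∈ T ×ˢ (univ : Finset Bool),
      ((1 - ((n : ℝ) - m) / (4 * K + 2)) * #T - 1) / 2 ≤
      ∑ z ∈ T ×ˢ (univ : Finset Bool), ∑ u ∈ T, e u z.1 z.2 := by
    have hS : ∑ z ∈ T ×ˢ (univ : Finset Bool), ∑ u ∈ T, e u z.1 z.2 =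
        ∑ u ∈ T, ∑ v ∈ T, ∑ b, e u v b := by
      rw [Finset.sum_comm]
      exact Finset.sum_congr rfl fun u _ => Finset.sum_product _ _ _
    rw [hS, Finset.sum_const, Finset.card_product, Finset.card_univ, Fintype.card_bool,
      nsmul_eq_mul]
    push_cast
    have h4 : (#T : ℝ) * 2 * (((1 - ((n : ℝ) - m) / (4 * K + 2)) * #T - 1) / 2) =
        (#T : ℝ) ^ 2 - #T - ((n : ℝ) - m) * ((#T : ℝ) ^ 2 / 2) / (2 * K + 1) := by
      have : (4 * K + 2 : ℝ) = 2 * (2 * K + 1) := by ring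
      rw [this]
      field_simp
      ring
    rw [h4]
    linarith
  obtain ⟨z, hz, hle⟩ := Finset.exists_le_of_sum_le (hne.product univ_nonempty) havg
  exact ⟨z.1, z.2, fun _ => (Finset.mem_product.mp hz).1, hle⟩

lemma DetCode.dec_add_dec_le {n : ℕ} {R : ℝ} (C : DetCode n R) (y : Fin n → Bool)
    {u v : Fin (numMessages n R)} (h : u ≠ v) : C.dec y u + C.dec y v ≤ 1 := by
  rw [← C.dec_sum y, ← Finset.sum_pair h]
  exact Finset.sum_le_sum_of_subset_of_nonneg (Finset.subset_univ _)
    fun w _ _ => C.dec_nonneg y w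

lemma rpow_le_numMessages (n : ℕ) (R : ℝ) : (2 : ℝ) ^ (R * n) ≤ numMessages n R :=
  Nat.le_ceil _

lemma numMessages_pos (n : ℕ) (R : ℝ) : 0 < numMessages n R :=
  Nat.ceil_pos.mpr (Real.rpow_pos_of_pos two_pos _)

lemma DetCode.rate_le_one {n : ℕ} {R : ℝ} (C : DetCode n R) (hn : 0 < n) : R ≤ 1 := by
  have hcard : numMessages n R ≤ 2 ^ n := by
    simpa using Fintype.card_le_of_injective C.enc C.enc_inj
  have h : (2 : ℝ) ^ (R * n) ≤ 2 ^ (n : ℝ) := by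
    rw [Real.rpow_natCast]
    exact (rpow_le_numMessages n R).trans (by exact_mod_cast hcard)
  have hle := (Real.rpow_le_rpow_left_iff one_lt_two).mp h
  have hn' : (0 : ℝ) < n := by exact_mod_cast hn
  nlinarith

/-- The wait-and-push attack: wait for the first `m` entries, then push the transmitted word
towards another codeword with the same head. -/
lemma DetCode.exists_adversary_waitAndPush {n m : ℕ} {R p : ℝ} (C : DetCode n R) (hm : m ≤ n)
    (K : ℕ) (hK : (K : ℝ) ≤ p * n) :
    ∃ A : CausalAdversary n p,
      ((1 - ((n : ℝ) - m) / (4 * K + 2)) - 2 ^ m / numMessages n R) / 2 ≤ C.errProb A := by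
  classical
  have hM := numMessages_pos n R
  have hM' : (0 : ℝ) < numMessages n R := by exact_mod_cast hM
  have : Nonempty (Fin (numMessages n R)) := ⟨⟨0, hM⟩⟩
  let T : (Fin m → Bool) → Finset (Fin (numMessages n R)) := fun w =>
    {u | headWord hm (C.enc u) = w}
  have hT : ∀ w, ∀ u ∈ T w, headWord hm (C.enc u) = w := fun w u hu => (mem_filter.mp hu).2
  choose v b hv herr using fun w => exists_confusing_target K hm (T w) C.enc w (hT w) C.dec
    C.dec_le_one (fun y _ _ h => C.dec_add_dec_le y h)
  let G : (Fin n → Bool) → Fin n → Bool := fun x i =>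
    decide (m ≤ i.1) && pushFlip K (b (headWord hm x)) x (C.enc (v (headWord hm x))) i
  have hcausal : ∀ x x' i, (∀ k ≤ i, x k = x' k) → G x i = G x' i := by
    intro x x' i h
    by_cases hi : m ≤ i.1
    · have hhead : headWord hm x = headWord hm x' := by
        funext k
        exact h _ (Fin.le_def.mpr (k.2.le.trans hi))
      have hrank : ∀ z, diffRank x z i = diffRank x' z i := by
        intro z
        unfold diffRank
        congr 1
        ext k
        simp only [mem_filter, mem_univ, true_and, and_congr_right_iff]
        intro hk
        rw [h k hk.le]
      simp only [G, hhead, pushFlip, hrank, h i le_rfl]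
    · simp [G, hi]
  have hpower : ∀ x, ((#{i | G x i = true} : ℕ) : ℝ) ≤ p * n := by
    intro x
    refine le_trans ?_ hK
    refine Nat.cast_le.mpr ((Finset.card_le_card ?_).trans
      (card_pushFlip_le K (b (headWord hm x)) x (C.enc (v (headWord hm x)))))
    intro i
    simp only [G, mem_filter, mem_univ, true_and, Bool.and_eq_true]
    exact fun h => h.2
  obtain ⟨A, hA⟩ := exists_causalAdversary G hcausal hpower
  refine ⟨A, ?_⟩
  have hG : ∀ w, ∀ u ∈ T w, G (C.enc u) =
      pushFlip K (b w) (C.enc u) (C.enc (v w)) := by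
    intro w u hu
    funext i
    have hw := hT w u hu
    have hvw := hT w (v w) (hv w ⟨u, hu⟩)
    by_cases hi : m ≤ i.1
    · simp [G, hi, hw]
    · have h := congrFun (hw.trans hvw.symm) ⟨i.1, not_le.mp hi⟩
      simp only [headWord, Fin.castLE_mk, Fin.eta] at h
      simp [G, hi, pushFlip, h]
  have hsum : ∑ u, ∑ j, A.μ j * (1 - C.dec (A.received (C.enc u) j) u) =
      ∑ w, ∑ u ∈ T w, (1 - C.dec (fun i => xor (C.enc u i)
        (pushFlip K (b w) (C.enc u) (C.enc (v w)) i)) u) := by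
    rw [← Finset.sum_fiberwise univ (fun u => headWord hm (C.enc u))]
    refine Finset.sum_congr rfl fun w _ => Finset.sum_congr rfl fun u hu => ?_
    rw [hA (fun y => 1 - C.dec y u), hG w u hu]
  have hcardT : ∑ w, (#(T w) : ℝ) = numMessages n R := by
    rw [← Nat.cast_sum, ← Finset.card_eq_sum_card_fiberwise (fun _ _ => mem_coe.mpr (mem_univ _))]
    simp
  have hlow : ((1 - ((n : ℝ) - m) / (4 * K + 2)) * numMessages n R - 2 ^ m) / 2 ≤
      ∑ u, ∑ j, A.μ j * (1 - C.dec (A.received (C.enc u) j) u) := by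
    rw [hsum]
    refine le_trans (le_of_eq ?_) (Finset.sum_le_sum fun w _ => herr w)
    rw [← Finset.sum_div, Finset.sum_sub_distrib, ← Finset.mul_sum, hcardT]
    simp
  rw [DetCode.errProb]
  refine le_trans (le_of_eq ?_) (mul_le_mul_of_nonneg_left hlow (by positivity))
  field_simp

/-- Quantitative form of Theorem 1: for every `p ∈ (0, 1/2]` and `ε > 0`, for all
sufficiently large `n`, every deterministic `(n, Rn)`-code with rate
`R = max(1 − 4p, 0) + ε` admits a causal adversary with power `p` forcing probability of
error at least `ε / (512 p)`. -/
theorem det_converse_quantitative (p ε : ℝ) (hp0 : 0 < p) (hp1 : p ≤ 1 / 2)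
    (hε : 0 < ε) :
    ∃ N : ℕ, ∀ n ≥ N, ∀ C : DetCode n (max (1 - 4 * p) 0 + ε),
      ∃ A : CausalAdversary n p, ε / (512 * p) ≤ C.errProb A := by
  have hlim : Filter.Tendsto (fun n : ℕ => ((2 : ℝ) ^ (-(ε / 2))) ^ n) Filter.atTop (nhds 0) :=
    tendsto_pow_atTop_nhds_zero_of_lt_one (by positivity)
      (Real.rpow_lt_one_of_one_lt_of_neg one_lt_two (by linarith))
  obtain ⟨N, hN⟩ := Filter.eventually_atTop.mp
    (hlim.eventually_le_const (show 0 < ε / (32 * p) by positivity))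
  refine ⟨max N (max ⌈12 / ε⌉₊ (⌈1 / p⌉₊ + 1)), fun n hn C => ?_⟩
  simp only [ge_iff_le, max_le_iff] at hn
  obtain ⟨hnN, hnε, hnp⟩ := hn
  have hnε' : 12 ≤ ε * n := by
    have := (div_le_iff₀ hε).mp (Nat.ceil_le.mp hnε)
    linarith
  have hnp' : 1 ≤ p * n := by
    have := (div_le_iff₀ hp0).mp (Nat.ceil_le.mp ((Nat.le_succ _).trans hnp))
    linarith
  have hn0 : 0 < n := (Nat.succ_pos _).trans_le hnp
  have hnR : (0 : ℝ) < n := by exact_mod_cast hn0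
  have hR := C.rate_le_one hn0
  have hR1 : 1 - 4 * p ≤ max (1 - 4 * p) 0 := le_max_left _ _
  have hR0 : 0 ≤ max (1 - 4 * p) 0 := le_max_right _ _
  generalize max (1 - 4 * p) 0 = r at *
  have hmnn : 0 ≤ (r + ε / 2) * n := by positivity
  have hmle := Nat.floor_le hmnn
  have hmlt := Nat.lt_floor_add_one ((r + ε / 2) * n)
  have hKle := Nat.floor_le (show 0 ≤ p * n by linarith)
  have hKlt := Nat.lt_floor_add_one (p * n)
  set m := ⌊(r + ε / 2) * n⌋₊
  set K := ⌊p * n⌋₊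
  have hm : m ≤ n := by
    have : (m : ℝ) ≤ n := hmle.trans (by nlinarith)
    exact_mod_cast this
  obtain ⟨A, hA⟩ := C.exists_adversary_waitAndPush hm K hKle
  refine ⟨A, le_trans ?_ hA⟩
  have hpow : (2 : ℝ) ^ m / numMessages n (r + ε) ≤ ε / (32 * p) := by
    refine le_trans ?_ (hN n hnN)
    rw [div_le_iff₀ (by exact_mod_cast numMessages_pos n (r + ε))]
    calc (2 : ℝ) ^ m = 2 ^ (m : ℝ) := (Real.rpow_natCast _ _).symm
      _ ≤ 2 ^ ((r + ε / 2) * n) := Real.rpow_le_rpow_of_exponent_le one_le_two hmle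
      _ = (2 ^ (-(ε / 2))) ^ n * 2 ^ ((r + ε) * n) := by
          rw [← Real.rpow_natCast, ← Real.rpow_mul two_pos.le, ← Real.rpow_add two_pos]
          ring_nf
      _ ≤ _ := mul_le_mul_of_nonneg_left (rpow_le_numMessages _ _) (by positivity)
  have hδ : ε / (16 * p) ≤ 1 - ((n : ℝ) - m) / (4 * K + 2) := by
    have hbound : ((n : ℝ) - m) / (4 * K + 2) ≤ 1 - ε / (16 * p) := by
      have hεp : ε ≤ 4 * p := by linarith
      have hfrac : ε / (16 * p) ≤ 1 := by
        rw [div_le_one (by positivity)]; linarith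
      rw [div_le_iff₀ (by positivity)]
      have h1 : (1 - ε / (16 * p)) * (4 * (p * n) - 2) ≤ (1 - ε / (16 * p)) * (4 * K + 2) :=
        mul_le_mul_of_nonneg_left (by linarith) (by linarith)
      have h2 : ε / (16 * p) * (4 * (p * n)) = ε * n / 4 := by field_simp; norm_num
      have h3 : 0 ≤ ε / (16 * p) := by positivity
      have h4 : (1 - 4 * p) * n ≤ r * n := mul_le_mul_of_nonneg_right hR1 hnR.le
      nlinarith
    linarith
  have h16 : ε / (16 * p) = 32 * (ε / (512 * p)) := by field_simp; norm_num
  have h32 : ε / (32 * p) = 16 * (ε / (512 * p)) := by field_simp; norm_num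
  have h512 : 0 ≤ ε / (512 * p) := by positivity
  linarith
end
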